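/- arXiv:2505.08407 — 4 statements merged into one kernel-verified Lean document; each statement's English description precedes it below -/
import Mathlib

section
/- Let (Ω, F, P) be a probability space and let X_B, X_E : Ω → ℝ be nonnegative integrable random variables (representing the instantaneous SNRs of the legitimate receiver Bob and the eavesdropper Eve) such that ln(X_B), log₂(1+X_B) and log₂(1+X_E) are integrable and X_B > 0 almost surely. Fix a blocklength n ≥ 1 (a natural number) and nonnegative real constants q_ε, q_δ ≥ 0 (the values Q⁻¹(ε_B) and Q⁻¹(δ) of the inverse Gaussian Q-function at the reliability and leakage targets, which are nonnegative when these targets are at most 1/2). Define the finite-blocklength secrecy rate R_s := max(log₂(1+X_B) − log₂(1+X_E), 0) − (q_ε/√n)·√((X_B² + 2X_B)/((ln 2)²(1+X_B)²)) − (q_δ/√n)·√((X_E² + 2X_E)/((ln 2)²(1+X_E)²)). Then E[R_s] ≥ log₂(1 + exp(E[ln X_B])) − log₂(1 + E[X_E]) − (q_ε/((ln 2)·√n))·√(1 − 1/(1 + E[X_B])²) − (q_δ/((ln 2)·√n))·√(1 − 1/(1 + E[X_E])²). -/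
open MeasureTheory

/-!
Dropping the positive part only lowers the rate, so it suffices to bound three kinds of
expectation, each by Jensen's inequality. In the log-domain variable `t = log x` the capacity
becomes `t ↦ log₂ (1 + exp t)`, which is convex since its derivative is a multiple of the increasing
sigmoid function; this bounds Bob's capacity from below. In `x` itself the capacity is concave,
which bounds Eve's capacity from above. Finally the dispersion equals
`(1 - 1 / (1 + x) ^ 2) / (log 2) ^ 2`, which is concave, and so is its square root; this bounds both
backoff terms from above.
-/

/-- The capacity `C` of the Gaussian channel, in bits per channel use, at signal-to-noise ratio
`x`. -/
noncomputable def channelCapacity (x : ℝ) : ℝ :=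
  Real.logb 2 (1 + x)

/-- The dispersion `V` of the Gaussian channel, in squared bits per channel use, at signal-to-noise
ratio `x`. It is the junk value `0` at `x = -1`. -/
noncomputable def channelDispersion (x : ℝ) : ℝ :=
  (x ^ 2 + 2 * x) / (Real.log 2 ^ 2 * (1 + x) ^ 2)

/-- The finite-blocklength secrecy rate at signal-to-noise ratios `x` (Bob) and `y` (Eve). The
coefficients `a` and `b` stand for `Q⁻¹(ε_B) / √n` and `Q⁻¹(δ) / √n`. -/
noncomputable def secrecyRate (a b x y : ℝ) : ℝ :=
  max (channelCapacity x - channelCapacity y) 0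
    - a * Real.sqrt (channelDispersion x) - b * Real.sqrt (channelDispersion y)

lemma hasDerivAt_log_one_add_exp (t : ℝ) :
    HasDerivAt (fun t => Real.log (1 + Real.exp t)) (Real.sigmoid t) t := by
  convert ((Real.hasDerivAt_exp t).const_add 1).log (by positivity) using 1
  rw [Real.sigmoid_def, Real.exp_neg]
  field_simp
  ring

lemma convexOn_log_one_add_exp :
    ConvexOn ℝ Set.univ fun t => Real.log (1 + Real.exp t) := by
  refine Monotone.convexOn_univ_of_deriv
    (fun t => (hasDerivAt_log_one_add_exp t).differentiableAt) ?_
  rw [funext fun t => (hasDerivAt_log_one_add_exp t).deriv]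
  exact Real.sigmoid_monotone

lemma convexOn_channelCapacity_exp :
    ConvexOn ℝ Set.univ fun t => channelCapacity (Real.exp t) := by
  refine (convexOn_log_one_add_exp.smul (c := (Real.log 2)⁻¹) (by positivity)).congr fun t _ => ?_
  simp only [channelCapacity, Real.logb, smul_eq_mul]
  ring

lemma concaveOn_channelCapacity : ConcaveOn ℝ (Set.Ioi (-1)) channelCapacity := by
  have hlog := (strictConcaveOn_log_Ioi.concaveOn.translate_right 1).smul
    (c := (Real.log 2)⁻¹) (by positivity)
  rw [Set.preimage_const_add_Ioi, zero_sub] at hlog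
  refine hlog.congr fun x _ => ?_
  simp only [channelCapacity, Real.logb, Function.comp_apply, smul_eq_mul]
  ring

lemma channelDispersion_eq {x : ℝ} (hx : 1 + x ≠ 0) :
    channelDispersion x = (1 - 1 / (1 + x) ^ 2) / Real.log 2 ^ 2 := by
  rw [channelDispersion]
  field_simp
  ring

lemma sqrt_channelDispersion {x : ℝ} (hx : 1 + x ≠ 0) :
    Real.sqrt (channelDispersion x) = Real.sqrt (1 - 1 / (1 + x) ^ 2) / Real.log 2 := by
  rw [channelDispersion_eq hx, Real.sqrt_div' _ (by positivity), Real.sqrt_sq (by positivity)]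

lemma channelDispersion_nonneg {x : ℝ} (hx : 0 ≤ x) : 0 ≤ channelDispersion x := by
  unfold channelDispersion
  positivity

lemma sqrt_channelDispersion_le (x : ℝ) :
    Real.sqrt (channelDispersion x) ≤ 1 / Real.log 2 := by
  by_cases hx : 1 + x = 0
  · simp [channelDispersion, hx, Real.log_nonneg]
  · rw [sqrt_channelDispersion hx]
    gcongr
    rw [Real.sqrt_le_one, sub_le_self_iff]
    positivity

lemma concaveOn_channelDispersion : ConcaveOn ℝ (Set.Ioi (-1)) channelDispersion := by
  have hinv := (convexOn_zpow (𝕜 := ℝ) (-2)).translate_right 1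
  rw [Set.preimage_const_add_Ioi, zero_sub] at hinv
  refine (((concaveOn_const 1 hinv.1).sub hinv).smul (c := (Real.log 2 ^ 2)⁻¹)
    (by positivity)).congr fun x hx => ?_
  have hx' : 1 + x ≠ 0 := by linarith [Set.mem_Ioi.1 hx]
  simp [channelDispersion_eq hx', div_eq_inv_mul, zpow_neg]

lemma concaveOn_sqrt_channelDispersion :
    ConcaveOn ℝ (Set.Ici 0) fun x => Real.sqrt (channelDispersion x) := by
  have hV : ConcaveOn ℝ (Set.Ici 0) channelDispersion :=
    concaveOn_channelDispersion.subset (Set.Ici_subset_Ioi.2 (by norm_num)) (convex_Ici 0)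
  refine ⟨convex_Ici 0, fun x hx y hy a b ha hb hab => ?_⟩
  calc a • Real.sqrt (channelDispersion x) + b • Real.sqrt (channelDispersion y)
      ≤ Real.sqrt (a • channelDispersion x + b • channelDispersion y) :=
        Real.strictConcaveOn_sqrt.concaveOn.2 (channelDispersion_nonneg hx)
          (channelDispersion_nonneg hy) ha hb hab
    _ ≤ Real.sqrt (channelDispersion (a • x + b • y)) :=
        Real.sqrt_le_sqrt (hV.2 hx hy ha hb hab)

section Expectation

variable {Ω : Type*} [MeasurableSpace Ω] {P : Measure Ω} {X Y : Ω → ℝ}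

lemma integrable_sqrt_channelDispersion [IsFiniteMeasure P] (hX : AEMeasurable X P) :
    Integrable (fun ω => Real.sqrt (channelDispersion (X ω))) P := by
  have hV : Measurable channelDispersion := by
    unfold channelDispersion
    fun_prop
  refine Integrable.of_bound (hV.comp_aemeasurable hX).sqrt.aestronglyMeasurable
    (1 / Real.log 2) (ae_of_all _ fun ω => ?_)
  rw [Real.norm_of_nonneg (Real.sqrt_nonneg _)]
  exact sqrt_channelDispersion_le (X ω)

lemma sub_le_integral_secrecyRate [IsFiniteMeasure P]
    (hX : AEMeasurable X P) (hY : AEMeasurable Y P)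
    (hCX : Integrable (fun ω => channelCapacity (X ω)) P)
    (hCY : Integrable (fun ω => channelCapacity (Y ω)) P) (a b : ℝ) :
    ∫ ω, channelCapacity (X ω) ∂P - ∫ ω, channelCapacity (Y ω) ∂P
        - a * ∫ ω, Real.sqrt (channelDispersion (X ω)) ∂P
        - b * ∫ ω, Real.sqrt (channelDispersion (Y ω)) ∂P ≤
      ∫ ω, secrecyRate a b (X ω) (Y ω) ∂P := by
  have hVX := (integrable_sqrt_channelDispersion hX).const_mul a
  have hVY := (integrable_sqrt_channelDispersion hY).const_mul b
  have hC : Integrable (fun ω => channelCapacity (X ω) - channelCapacity (Y ω)) P :=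
    hCX.sub hCY
  have hCV : Integrable (fun ω => channelCapacity (X ω) - channelCapacity (Y ω)
      - a * Real.sqrt (channelDispersion (X ω))) P := hC.sub hVX
  rw [← integral_const_mul, ← integral_const_mul, ← integral_sub hCX hCY,
    ← integral_sub hC hVX, ← integral_sub hCV hVY]
  refine integral_mono (hCV.sub hVY) ((hC.pos_part.sub hVX).sub hVY) fun ω => ?_
  exact sub_le_sub_right (sub_le_sub_right (le_max_left _ _) _) _

variable [IsProbabilityMeasure P]

lemma channelCapacity_exp_integral_log_le (hpos : ∀ᵐ ω ∂P, 0 < X ω)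
    (hlog : Integrable (fun ω => Real.log (X ω)) P)
    (hC : Integrable (fun ω => channelCapacity (X ω)) P) :
    channelCapacity (Real.exp (∫ ω, Real.log (X ω) ∂P)) ≤ ∫ ω, channelCapacity (X ω) ∂P := by
  have hexp : (fun ω => channelCapacity (Real.exp (Real.log (X ω))))
      =ᵐ[P] fun ω => channelCapacity (X ω) :=
    hpos.mono fun ω hω => congrArg channelCapacity (Real.exp_log hω)
  rw [← integral_congr_ae hexp]
  exact convexOn_channelCapacity_exp.map_integral_le
    (convexOn_channelCapacity_exp.continuousOn isOpen_univ) isClosed_univ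
    (ae_of_all _ fun _ => Set.mem_univ _) hlog (hC.congr hexp.symm)

lemma integral_channelCapacity_le (hnonneg : ∀ᵐ ω ∂P, 0 ≤ X ω) (hX : Integrable X P)
    (hC : Integrable (fun ω => channelCapacity (X ω)) P) :
    ∫ ω, channelCapacity (X ω) ∂P ≤ channelCapacity (∫ ω, X ω ∂P) := by
  have hsub : Set.Ici (0 : ℝ) ⊆ Set.Ioi (-1) := Set.Ici_subset_Ioi.2 (by norm_num)
  exact (concaveOn_channelCapacity.subset hsub (convex_Ici 0)).le_map_integral
    ((concaveOn_channelCapacity.continuousOn isOpen_Ioi).mono hsub) isClosed_Ici hnonneg hX hC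

lemma integral_sqrt_channelDispersion_le (hnonneg : ∀ᵐ ω ∂P, 0 ≤ X ω) (hX : Integrable X P) :
    ∫ ω, Real.sqrt (channelDispersion (X ω)) ∂P ≤
      Real.sqrt (channelDispersion (∫ ω, X ω ∂P)) := by
  have hcont : ContinuousOn channelDispersion (Set.Ici 0) :=
    (concaveOn_channelDispersion.continuousOn isOpen_Ioi).mono
      (Set.Ici_subset_Ioi.2 (by norm_num))
  exact concaveOn_sqrt_channelDispersion.le_map_integral hcont.sqrt isClosed_Ici hnonneg hX
    (integrable_sqrt_channelDispersion hX.aemeasurable)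

end Expectation

/-- Lower bound on the average finite-blocklength achievable secrecy rate over the
fading distributions of Bob's and Eve's SNRs. -/
theorem average_secrecy_rate_lower_bound {Ω : Type*} [MeasurableSpace Ω]
    (P : Measure Ω) [IsProbabilityMeasure P] (XB XE : Ω → ℝ)
    (hXBm : Measurable XB) (hXEm : Measurable XE)
    (hXBnn : ∀ ω, 0 ≤ XB ω) (hXEnn : ∀ ω, 0 ≤ XE ω)
    (hXBint : Integrable XB P) (hXEint : Integrable XE P)
    (hln : Integrable (fun ω => Real.log (XB ω)) P)
    (hCB : Integrable (fun ω => Real.logb 2 (1 + XB ω)) P)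
    (hCE : Integrable (fun ω => Real.logb 2 (1 + XE ω)) P)
    (hXBpos : ∀ᵐ ω ∂P, 0 < XB ω)
    (n : ℕ) (hn : 1 ≤ n) (qε qδ : ℝ) (hqε : 0 ≤ qε) (hqδ : 0 ≤ qδ) :
    ∫ ω, (max (Real.logb 2 (1 + XB ω) - Real.logb 2 (1 + XE ω)) 0
        - (qε / Real.sqrt n) *
            Real.sqrt ((XB ω ^ 2 + 2 * XB ω) / (Real.log 2 ^ 2 * (1 + XB ω) ^ 2))
        - (qδ / Real.sqrt n) *
            Real.sqrt ((XE ω ^ 2 + 2 * XE ω) / (Real.log 2 ^ 2 * (1 + XE ω) ^ 2))) ∂P ≥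
      Real.logb 2 (1 + Real.exp (∫ ω, Real.log (XB ω) ∂P))
        - Real.logb 2 (1 + ∫ ω, XE ω ∂P)
        - (qε / (Real.log 2 * Real.sqrt n)) *
            Real.sqrt (1 - 1 / (1 + ∫ ω, XB ω ∂P) ^ 2)
        - (qδ / (Real.log 2 * Real.sqrt n)) *
            Real.sqrt (1 - 1 / (1 + ∫ ω, XE ω ∂P) ^ 2) := by
  have hBackoff (q : ℝ) {x : ℝ} (hx : 0 ≤ x) :
      q / (Real.log 2 * Real.sqrt n) * Real.sqrt (1 - 1 / (1 + x) ^ 2) =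
        q / Real.sqrt n * Real.sqrt (channelDispersion x) := by
    rw [sqrt_channelDispersion (by positivity)]
    ring
  rw [ge_iff_le, hBackoff qε (integral_nonneg hXBnn), hBackoff qδ (integral_nonneg hXEnn)]
  refine le_trans ?_ (sub_le_integral_secrecyRate hXBm.aemeasurable hXEm.aemeasurable hCB hCE
    (qε / Real.sqrt n) (qδ / Real.sqrt n))
  gcongr
  · exact channelCapacity_exp_integral_log_le hXBpos hln hCB
  · exact integral_channelCapacity_le (ae_of_all _ hXEnn) hXEint hCE
  · exact integral_sqrt_channelDispersion_le (ae_of_all _ hXBnn) hXBint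
  · exact integral_sqrt_channelDispersion_le (ae_of_all _ hXEnn) hXEint
end

section
/- Let (Ω, F, P) be a probability space and let X : Ω → ℝ be a random variable with X > 0 almost surely such that ln(X) and log₂(1+X) are integrable. Then E[log₂(1+X)] ≥ log₂(1 + exp(E[ln X])). -/
open MeasureTheory

/-! The function `u ↦ log (a + exp u)` has derivative `exp u / (a + exp u)`, which takes values in
`[0, 1]` and is monotone. The function is therefore convex, so that Jensen's inequality applies to
`u = log X`, and `1`-Lipschitz, so that it preserves integrability on a finite measure space. -/

section LogAddExp

variable {a : ℝ}

theorem hasDerivAt_log_add_exp (ha : 0 ≤ a) (u : ℝ) :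
    HasDerivAt (fun u => Real.log (a + Real.exp u)) (Real.exp u / (a + Real.exp u)) u :=
  ((Real.hasDerivAt_exp u).const_add a).log (by positivity)

theorem monotone_exp_div_add_exp (ha : 0 ≤ a) :
    Monotone fun u => Real.exp u / (a + Real.exp u) := by
  intro u v huv
  rw [div_le_div_iff₀ (by positivity) (by positivity)]
  have hexp : a * Real.exp u ≤ a * Real.exp v := by gcongr
  linarith

theorem convexOn_log_add_exp (ha : 0 ≤ a) :
    ConvexOn ℝ Set.univ fun u => Real.log (a + Real.exp u) := by
  refine Monotone.convexOn_univ_of_deriv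
    (fun u => (hasDerivAt_log_add_exp ha u).differentiableAt) ?_
  rw [deriv_eq (hasDerivAt_log_add_exp ha)]
  exact monotone_exp_div_add_exp ha

theorem lipschitzWith_log_add_exp (ha : 0 ≤ a) :
    LipschitzWith 1 fun u => Real.log (a + Real.exp u) := by
  refine lipschitzWith_of_nnnorm_deriv_le
    (fun u => (hasDerivAt_log_add_exp ha u).differentiableAt) fun u => ?_
  rw [(hasDerivAt_log_add_exp ha u).deriv, ← NNReal.coe_le_coe, coe_nnnorm, NNReal.coe_one,
    Real.norm_of_nonneg (by positivity)]
  exact div_le_one_of_le₀ (le_add_of_nonneg_left ha) (by positivity)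

end LogAddExp

section Integral

variable {Ω : Type*} [MeasurableSpace Ω] {P : Measure Ω}

theorem integrable_comp_of_lipschitzWith {E F : Type*} [NormedAddCommGroup E]
    [NormedAddCommGroup F] [IsFiniteMeasure P] {K : NNReal} {g : E → F} {f : Ω → E}
    (hg : LipschitzWith K g) (hf : Integrable f P) : Integrable (g ∘ f) P := by
  have hg₀ : LipschitzWith K fun x => g x - g 0 := by
    simpa only [add_zero] using hg.sub (LipschitzWith.const (g 0))
  have hcomp : Integrable (fun ω => g (f ω) - g 0) P :=
    memLp_one_iff_integrable.mp (hg₀.comp_memLp (sub_self _) (memLp_one_iff_integrable.mpr hf))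
  simpa only [Function.comp_def, Pi.add_def, sub_add_cancel] using
    hcomp.add (integrable_const (g 0))

variable [IsProbabilityMeasure P] {a : ℝ}

theorem log_add_exp_integral_le (ha : 0 ≤ a) {Y : Ω → ℝ} (hY : Integrable Y P) :
    Real.log (a + Real.exp (∫ ω, Y ω ∂P)) ≤ ∫ ω, Real.log (a + Real.exp (Y ω)) ∂P :=
  (convexOn_log_add_exp ha).map_integral_le (lipschitzWith_log_add_exp ha).continuous.continuousOn
    isClosed_univ (ae_of_all P fun _ => Set.mem_univ _) hY
    (integrable_comp_of_lipschitzWith (lipschitzWith_log_add_exp ha) hY)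

theorem log_add_exp_integral_log_le (ha : 0 ≤ a) {X : Ω → ℝ} (hpos : ∀ᵐ ω ∂P, 0 < X ω)
    (hln : Integrable (fun ω => Real.log (X ω)) P) :
    Real.log (a + Real.exp (∫ ω, Real.log (X ω) ∂P)) ≤ ∫ ω, Real.log (a + X ω) ∂P := by
  have hexp : ∀ᵐ ω ∂P, Real.log (a + Real.exp (Real.log (X ω))) = Real.log (a + X ω) := by
    filter_upwards [hpos] with ω hω
    rw [Real.exp_log hω]
  exact (log_add_exp_integral_le ha hln).trans_eq (integral_congr_ae hexp)

theorem expectation_logb_one_add_ge_general (ha : 0 ≤ a) {b : ℝ} (hb : 1 < b) {X : Ω → ℝ}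
    (hpos : ∀ᵐ ω ∂P, 0 < X ω) (hln : Integrable (fun ω => Real.log (X ω)) P) :
    Real.logb b (a + Real.exp (∫ ω, Real.log (X ω) ∂P)) ≤ ∫ ω, Real.logb b (a + X ω) ∂P := by
  have hb_log : 0 ≤ Real.log b := Real.log_nonneg hb.le
  simp only [Real.logb, integral_div]
  gcongr
  exact log_add_exp_integral_log_le ha hpos hln

end Integral

/-- If `X > 0` a.s. and `ln X` and `log₂(1+X)` are integrable, then
`E[log₂(1+X)] ≥ log₂(1 + exp(E[ln X]))`. -/
theorem expectation_logb_one_add_ge {Ω : Type*} [MeasurableSpace Ω]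
    (P : Measure Ω) [IsProbabilityMeasure P] (X : Ω → ℝ)
    (hpos : ∀ᵐ ω ∂P, 0 < X ω)
    (hln : Integrable (fun ω => Real.log (X ω)) P)
    (hlog : Integrable (fun ω => Real.logb 2 (1 + X ω)) P) :
    ∫ ω, Real.logb 2 (1 + X ω) ∂P ≥
      Real.logb 2 (1 + Real.exp (∫ ω, Real.log (X ω) ∂P)) :=
  expectation_logb_one_add_ge_general zero_le_one one_lt_two hpos hln
end

section
/- The function x ↦ √((x² + 2x)/(1 + x)²) is concave on the interval [0, ∞). -/
/-! Since `x² + 2x = (1 + x)² - 1`, the ratio is `1 - (1 + x)⁻²`, which is concave because negative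
powers are convex on the positive half-line. The square root, being monotone and concave, preserves
concavity of nonnegative functions. -/

theorem sq_add_two_mul_div_one_add_sq_eq_one_sub_zpow {K : Type*} [Field K] {x : K}
    (hx : 1 + x ≠ 0) : (x ^ 2 + 2 * x) / (1 + x) ^ 2 = 1 - (1 + x) ^ (-2 : ℤ) := by
  rw [zpow_neg, zpow_ofNat]
  field_simp
  ring

section LinearOrderedField

variable {K : Type*} [Field K] [LinearOrder K] [IsStrictOrderedRing K]

theorem convexOn_one_add_zpow (n : ℤ) :
    ConvexOn K (Set.Ioi (-1)) (fun x : K => (1 + x) ^ n) := by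
  rw [← zero_sub, ← Set.preimage_const_add_Ioi]
  exact (convexOn_zpow n).translate_right 1

theorem concaveOn_sq_add_two_mul_div_one_add_sq :
    ConcaveOn K (Set.Ioi (-1)) (fun x : K => (x ^ 2 + 2 * x) / (1 + x) ^ 2) := by
  have hconcave : ConcaveOn K (Set.Ioi (-1)) (fun x : K => 1 - (1 + x) ^ (-2 : ℤ)) :=
    (concaveOn_const 1 (convex_Ioi (-1))).sub (convexOn_one_add_zpow (-2))
  refine hconcave.congr fun x hx => (sq_add_two_mul_div_one_add_sq_eq_one_sub_zpow ?_).symm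
  exact (neg_lt_iff_pos_add'.1 hx).ne'

end LinearOrderedField

theorem concaveOn_sqrt_of_nonneg {E : Type*} [AddCommMonoid E] [SMul ℝ E] {s : Set E} {f : E → ℝ}
    (hf : ConcaveOn ℝ s f) (hf₀ : ∀ x ∈ s, 0 ≤ f x) : ConcaveOn ℝ s (fun x => √(f x)) := by
  refine ⟨hf.1, fun x hx y hy a b ha hb hab => ?_⟩
  calc a • √(f x) + b • √(f y)
      ≤ √(a • f x + b • f y) :=
        Real.strictConcaveOn_sqrt.concaveOn.2 (hf₀ x hx) (hf₀ y hy) ha hb hab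
    _ ≤ √(f (a • x + b • y)) := Real.sqrt_le_sqrt (hf.2 hx hy ha hb hab)

/-- The function `x ↦ √((x² + 2x)/(1+x)²)` is concave on `[0, ∞)`. -/
theorem sqrt_dispersion_concaveOn :
    ConcaveOn ℝ (Set.Ici (0 : ℝ))
      (fun x : ℝ => Real.sqrt ((x ^ 2 + 2 * x) / (1 + x) ^ 2)) := by
  have hconcave : ConcaveOn ℝ (Set.Ici 0) (fun x : ℝ => (x ^ 2 + 2 * x) / (1 + x) ^ 2) :=
    concaveOn_sq_add_two_mul_div_one_add_sq.subset
      (Set.Ici_subset_Ioi.2 neg_one_lt_zero) (convex_Ici 0)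
  refine concaveOn_sqrt_of_nonneg hconcave fun x hx => ?_
  rw [Set.mem_Ici] at hx
  positivity
end

section
/- Let (Ω, F, P) be a probability space and let X : Ω → ℝ be a nonnegative integrable random variable. Then E[√((X² + 2X)/(1 + X)²)] ≤ √(1 − 1/(1 + E[X])²); equivalently, E[−√((X² + 2X)/(1 + X)²)] ≥ −√(1 − 1/(1 + E[X])²). -/
open MeasureTheory

/-- The dispersion of the Gaussian channel at signal-to-noise ratio `x`, measured in squared nats,
that is, without the factor `1 / (log 2) ^ 2` which converts to squared bits. -/
noncomputable def gaussianDispersion (x : ℝ) : ℝ :=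
  (x ^ 2 + 2 * x) / (1 + x) ^ 2

theorem gaussianDispersion_eq_one_sub {x : ℝ} (hx : 1 + x ≠ 0) :
    gaussianDispersion x = 1 - 1 / (1 + x) ^ 2 := by
  unfold gaussianDispersion
  field_simp
  ring

theorem gaussianDispersion_nonneg {x : ℝ} (hx : 0 ≤ x) : 0 ≤ gaussianDispersion x := by
  unfold gaussianDispersion
  positivity

theorem gaussianDispersion_le_one (x : ℝ) : gaussianDispersion x ≤ 1 :=
  div_le_one_of_le₀ (by linarith) (sq_nonneg _)

theorem measurable_gaussianDispersion : Measurable gaussianDispersion := by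
  unfold gaussianDispersion
  fun_prop

theorem continuousOn_gaussianDispersion : ContinuousOn gaussianDispersion {-1}ᶜ := by
  refine ContinuousOn.div (by fun_prop) (by fun_prop) fun x (hx : x ≠ -1) => pow_ne_zero 2 ?_
  contrapose! hx
  linarith

theorem concaveOn_gaussianDispersion : ConcaveOn ℝ (Set.Ioi (-1)) gaussianDispersion := by
  have hconvex : ConvexOn ℝ (Set.Ioi (-1)) fun x : ℝ => 1 / (1 + x) ^ 2 := by
    simpa only [Set.preimage_const_add_Ioi, zero_sub, Function.comp_def, zpow_neg, zpow_ofNat,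
      ← one_div] using (convexOn_zpow (𝕜 := ℝ) (-2)).translate_right 1
  refine ((concaveOn_const 1 (convex_Ioi _)).sub hconvex).congr fun x (hx : -1 < x) => ?_
  exact (gaussianDispersion_eq_one_sub (by linarith)).symm

theorem concaveOn_sqrt_comp {E : Type*} [AddCommMonoid E] [SMul ℝ E] {s : Set E} {f : E → ℝ}
    (hf : ConcaveOn ℝ s f) (hnonneg : ∀ x ∈ s, 0 ≤ f x) : ConcaveOn ℝ s fun x => √(f x) :=
  ⟨hf.1, fun x hx y hy _ _ ha hb hab =>
    (Real.strictConcaveOn_sqrt.concaveOn.2 (hnonneg x hx) (hnonneg y hy) ha hb hab).trans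
      (Real.sqrt_le_sqrt (hf.2 hx hy ha hb hab))⟩

theorem concaveOn_sqrt_gaussianDispersion :
    ConcaveOn ℝ (Set.Ici 0) fun x => √(gaussianDispersion x) :=
  concaveOn_sqrt_comp
    (concaveOn_gaussianDispersion.subset (Set.Ici_subset_Ioi.mpr (by norm_num)) (convex_Ici 0))
    fun _ => gaussianDispersion_nonneg

theorem continuousOn_sqrt_gaussianDispersion :
    ContinuousOn (fun x => √(gaussianDispersion x)) (Set.Ici 0) :=
  (continuousOn_gaussianDispersion.mono fun x (hx : 0 ≤ x) (h : x = -1) => by linarith).sqrt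

theorem integrable_sqrt_gaussianDispersion {Ω : Type*} [MeasurableSpace Ω] {μ : Measure Ω}
    [IsFiniteMeasure μ] {X : Ω → ℝ} (hX : AEMeasurable X μ) :
    Integrable (fun ω => √(gaussianDispersion (X ω))) μ := by
  refine .of_bound
    (measurable_gaussianDispersion.comp_aemeasurable hX).sqrt.aestronglyMeasurable 1
    (.of_forall fun ω => ?_)
  rw [Real.norm_of_nonneg (Real.sqrt_nonneg _)]
  exact Real.sqrt_le_one.mpr (gaussianDispersion_le_one _)

/-- For a nonnegative integrable random variable `X`,
`E[√((X² + 2X)/(1+X)²)] ≤ √(1 - 1/(1 + E[X])²)`; equivalently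
`E[-√((X² + 2X)/(1+X)²)] ≥ -√(1 - 1/(1 + E[X])²)`. -/
theorem expectation_sqrt_dispersion_le {Ω : Type*} [MeasurableSpace Ω]
    (P : Measure Ω) [IsProbabilityMeasure P] (X : Ω → ℝ)
    (hm : Measurable X) (hnn : ∀ ω, 0 ≤ X ω) (hint : Integrable X P) :
    (∫ ω, Real.sqrt ((X ω ^ 2 + 2 * X ω) / (1 + X ω) ^ 2) ∂P ≤
        Real.sqrt (1 - 1 / (1 + ∫ ω, X ω ∂P) ^ 2)) ∧
      (∫ ω, -Real.sqrt ((X ω ^ 2 + 2 * X ω) / (1 + X ω) ^ 2) ∂P ≥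
        -Real.sqrt (1 - 1 / (1 + ∫ ω, X ω ∂P) ^ 2)) := by
  have hJensen : ∫ ω, √(gaussianDispersion (X ω)) ∂P ≤ √(gaussianDispersion (∫ ω, X ω ∂P)) :=
    concaveOn_sqrt_gaussianDispersion.le_map_integral continuousOn_sqrt_gaussianDispersion
      isClosed_Ici (.of_forall hnn) hint (integrable_sqrt_gaussianDispersion hm.aemeasurable)
  have hmean : 0 ≤ ∫ ω, X ω ∂P := integral_nonneg hnn
  rw [gaussianDispersion_eq_one_sub (by positivity)] at hJensen
  rw [integral_neg]
  exact ⟨hJensen, neg_le_neg hJensen⟩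
end
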